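/- arXiv:2207.05156 — 2 statements merged into one kernel-verified Lean document; each statement's English description precedes it below -/
import Mathlib

section
/- Let a, b_1, b_2, c be real numbers with c > a > 0, and let x ∈ (0,1). Then sgn(D_a (F(a,b_1,c,x) / F(a,b_2,c,x))) = sgn(b_1 − b_2), where D_a denotes the derivative with respect to the parameter a of the ratio of the two hypergeometric functions. -/
/-- The rising factorial (Pochhammer symbol): `(y)_j = y(y+1)⋯(y+j-1)`, `(y)_0 = 1`. -/
noncomputable def risingFactorial (y : ℝ) : ℕ → ℝ
  | 0 => 1
  | m + 1 => risingFactorial y m * (y + m)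

/-- The Gaussian hypergeometric function
`F(a,b,c,x) = ∑_{j≥0} (a)_j (b)_j / ((c)_j j!) xʲ`. -/
noncomputable def hypF (a b c x : ℝ) : ℝ :=
  ∑' j : ℕ, risingFactorial a j * risingFactorial b j /
    (risingFactorial c j * (Nat.factorial j : ℝ)) * x ^ j


/-!
By Euler's integral representation, `F(a,b,c,x)` is, up to a beta-function factor independent of
`b`, the integral over `(0,1)` of `tᵃ⁻¹ (1-t)ᶜ⁻ᵃ⁻¹ (1-xt)⁻ᵇ`, and differentiating in `a` multiplies
the integrand by `logit t = log t - log (1 - t)`. The sign of the derivative of the ratio is hence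
the sign of a difference of two `logit`-means, taken with weights whose ratio is
`(1-xt)^(b₂-b₁)`. Since `logit` is increasing and this ratio is strictly monotone in `t`,
Chebyshev's correlation inequality decides the sign. The argument works for `|x| < 1`, with
`x (b₁ - b₂)` in place of `b₁ - b₂`.
-/

open MeasureTheory Set Filter

/-! ### Chebyshev's correlation inequality -/

section Chebyshev

variable {α : Type*} {p q g : α → ℝ}

lemma cross_mul_sub_eq (z : α × α) :
    (p z.1 * q z.2 - p z.2 * q z.1) * (g z.1 - g z.2) =
      ((p z.1 * g z.1) * q z.2 + q z.1 * (p z.2 * g z.2)) -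
        (p z.1 * (q z.2 * g z.2) + (q z.1 * g z.1) * p z.2) := by
  ring

variable [MeasurableSpace α] {μ : Measure α}

lemma integral_pos_of_ae_pos {f : α → ℝ} (hμ : μ ≠ 0) (hf : Integrable f μ)
    (hpos : ∀ᵐ t ∂μ, 0 < f t) : 0 < ∫ t, f t ∂μ := by
  have hsupport : Function.support f =ᵐ[μ] univ :=
    eventuallyEq_univ.2 (hpos.mono fun t ht => ht.ne')
  rw [integral_pos_iff_support_of_nonneg_ae (hpos.mono fun t ht => ht.le) hf,
    measure_congr hsupport]
  exact Measure.measure_univ_pos.2 hμ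

lemma ae_prod_fst_ne_snd [MeasurableEq α] [NullSingletonClass μ] :
    ∀ᵐ z ∂μ.prod μ, z.1 ≠ z.2 := by
  have hnull : μ.prod μ (diagonal α) = 0 :=
    Measure.measure_prod_null_of_ae_null measurableSet_diagonal
      (ae_of_all _ fun s => by simp [preimage, diagonal])
  filter_upwards [compl_mem_ae_iff.2 hnull] with z hz using hz

lemma integrable_cross_mul_sub (hp : Integrable p μ) (hq : Integrable q μ)
    (hpg : Integrable (fun t => p t * g t) μ) (hqg : Integrable (fun t => q t * g t) μ) :
    Integrable (fun z : α × α => (p z.1 * q z.2 - p z.2 * q z.1) * (g z.1 - g z.2))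
      (μ.prod μ) := by
  simp only [cross_mul_sub_eq]
  exact ((hpg.mul_prod hq).add (hq.mul_prod hpg)).sub ((hp.mul_prod hqg).add (hqg.mul_prod hp))

lemma integral_cross_mul_sub [SFinite μ] (hp : Integrable p μ) (hq : Integrable q μ)
    (hpg : Integrable (fun t => p t * g t) μ) (hqg : Integrable (fun t => q t * g t) μ) :
    ∫ z : α × α, (p z.1 * q z.2 - p z.2 * q z.1) * (g z.1 - g z.2) ∂μ.prod μ =
      2 * ((∫ t, p t * g t ∂μ) * ∫ t, q t ∂μ) - 2 * ((∫ t, p t ∂μ) * ∫ t, q t * g t ∂μ) := by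
  simp only [cross_mul_sub_eq]
  rw [integral_sub (by exact (hpg.mul_prod hq).add (hq.mul_prod hpg))
      (by exact (hp.mul_prod hqg).add (hqg.mul_prod hp)),
    integral_add (hpg.mul_prod hq) (hq.mul_prod hpg),
    integral_add (hp.mul_prod hqg) (hqg.mul_prod hp)]
  have hprod (u v : α → ℝ) :
      ∫ z, u z.1 * v z.2 ∂μ.prod μ = (∫ t, u t ∂μ) * ∫ t, v t ∂μ := integral_prod_mul u v
  rw [hprod (fun t => p t * g t), hprod q (fun t => p t * g t),
    hprod p (fun t => q t * g t), hprod (fun t => q t * g t)]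
  ring

-- The difference of the two sides is half the double integral of
-- `(p u * q v - p v * q u) * (g u - g v)`, whose integrand is positive off the diagonal.
lemma setIntegral_mul_setIntegral_mul_lt_of_strictMonoOn [LinearOrder α] [MeasurableEq α]
    [SFinite μ] [NullSingletonClass μ] {s : Set α} (hs : MeasurableSet s) (hμs : μ s ≠ 0)
    (hq_pos : ∀ t ∈ s, 0 < q t)
    (hratio : StrictMonoOn (fun t => p t / q t) s) (hg : StrictMonoOn g s)
    (hp : IntegrableOn p s μ) (hq : IntegrableOn q s μ)
    (hpg : IntegrableOn (fun t => p t * g t) s μ) (hqg : IntegrableOn (fun t => q t * g t) s μ) :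
    (∫ t in s, p t ∂μ) * (∫ t in s, q t * g t ∂μ) <
      (∫ t in s, p t * g t ∂μ) * ∫ t in s, q t ∂μ := by
  have cross_pos : ∀ u ∈ s, ∀ v ∈ s, u < v →
      0 < (p v * q u - p u * q v) * (g v - g u) := fun u hu v hv huv =>
    mul_pos (sub_pos.2 ((div_lt_div_iff₀ (hq_pos u hu) (hq_pos v hv)).1 (hratio hu hv huv)))
      (sub_pos.2 (hg hu hv huv))
  have hmem : ∀ᵐ t ∂μ.restrict s, t ∈ s := ae_restrict_mem hs
  have hpos : ∀ᵐ z ∂(μ.restrict s).prod (μ.restrict s),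
      0 < (p z.1 * q z.2 - p z.2 * q z.1) * (g z.1 - g z.2) := by
    filter_upwards [ae_prod_fst_ne_snd, Measure.quasiMeasurePreserving_fst.ae hmem,
      Measure.quasiMeasurePreserving_snd.ae hmem] with z hne hz₁ hz₂
    rcases hne.lt_or_gt with hlt | hgt
    · linarith [cross_pos _ hz₁ _ hz₂ hlt]
    · exact cross_pos _ hz₂ _ hz₁ hgt
  have hprod_ne : (μ.restrict s).prod (μ.restrict s) ≠ 0 := by
    simp [← Measure.measure_univ_eq_zero, ← univ_prod_univ, Measure.prod_prod, hμs]
  have hcross := integral_pos_of_ae_pos hprod_ne (integrable_cross_mul_sub hp hq hpg hqg) hpos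
  rw [integral_cross_mul_sub hp hq hpg hqg] at hcross
  linarith

end Chebyshev

/-! ### Rising factorials and the binomial series -/

lemma risingFactorial_eq_eval_ascPochhammer (y : ℝ) (n : ℕ) :
    risingFactorial y n = (ascPochhammer ℝ n).eval y := by
  induction n with
  | zero => simp [risingFactorial]
  | succ n ih => rw [risingFactorial, ih, ascPochhammer_succ_eval]

lemma ringChoose_add_sub_one_eq (b : ℝ) (n : ℕ) :
    Ring.choose (b + n - 1) n = risingFactorial b n / n.factorial := by
  have h := Ring.factorial_nsmul_multichoose_eq_ascPochhammer b n
  rw [Polynomial.ascPochhammer_smeval_eq_eval, ← risingFactorial_eq_eval_ascPochhammer,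
    Ring.multichoose_eq, nsmul_eq_mul] at h
  rw [← h, mul_div_cancel_left₀ _ (by positivity)]

lemma hasSum_risingFactorial_div_factorial_mul_pow (b : ℝ) {y : ℝ} (hy : |y| < 1) :
    HasSum (fun n : ℕ => risingFactorial b n / n.factorial * y ^ n) ((1 - y) ^ (-b)) := by
  have h := (Real.one_div_one_sub_rpow_hasFPowerSeriesOnBall_zero b).hasSum (y := y)
    (by simpa [← ofReal_norm] using hy)
  have h1 : 0 ≤ 1 - y := by linarith [abs_lt.1 hy]
  simpa [ringChoose_add_sub_one_eq, Real.rpow_neg h1, mul_comm] using h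

lemma gamma_add_natCast {y : ℝ} (hy : 0 < y) (n : ℕ) :
    Real.Gamma (y + n) = Real.Gamma y * risingFactorial y n := by
  induction n with
  | zero => simp [risingFactorial]
  | succ n ih =>
    rw [Nat.cast_succ, ← add_assoc, Real.Gamma_add_one (by positivity), ih, risingFactorial]
    ring

lemma beta_add_natCast {α β : ℝ} (hα : 0 < α) (hβ : 0 < β) (n : ℕ) :
    ProbabilityTheory.beta (α + n) β =
      ProbabilityTheory.beta α β * (risingFactorial α n / risingFactorial (α + β) n) := by
  rw [ProbabilityTheory.beta, ProbabilityTheory.beta, add_right_comm, gamma_add_natCast hα,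
    gamma_add_natCast (add_pos hα hβ)]
  ring

/-! ### The beta weight and its logarithmic derivative -/

/-- The unnormalised density `tᵅ⁻¹ (1-t)ᵝ⁻¹` of the beta distribution, meaningful for
`t ∈ (0,1)`. -/
noncomputable def betaWeight (α β t : ℝ) : ℝ := t ^ (α - 1) * (1 - t) ^ (β - 1)

/-- The log-odds function on `(0,1)`; it is the logarithmic derivative in `a` of
`betaWeight a (c - a) t`. -/
noncomputable def logit (t : ℝ) : ℝ := Real.log t - Real.log (1 - t)

@[fun_prop]
lemma measurable_betaWeight (α β : ℝ) : Measurable (betaWeight α β) := by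
  unfold betaWeight; fun_prop

@[fun_prop]
lemma measurable_logit : Measurable logit := by
  unfold logit; fun_prop

lemma strictMonoOn_logit : StrictMonoOn logit (Ioo 0 1) := fun s hs t ht hst =>
  sub_lt_sub (Real.log_lt_log hs.1 hst) (Real.log_lt_log (sub_pos.2 ht.2) (by linarith))

lemma ofReal_betaWeight (α β : ℝ) {t : ℝ} (ht : t ∈ Icc 0 1) :
    ((betaWeight α β t : ℝ) : ℂ) = (t : ℂ) ^ ((α : ℂ) - 1) * (1 - (t : ℂ)) ^ ((β : ℂ) - 1) := by
  rw [betaWeight, Complex.ofReal_mul, Complex.ofReal_cpow ht.1,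
    Complex.ofReal_cpow (sub_nonneg.2 ht.2)]
  norm_cast

lemma integrableOn_betaWeight {α β : ℝ} (hα : 0 < α) (hβ : 0 < β) :
    IntegrableOn (betaWeight α β) (Ioo 0 1) := by
  have h := Complex.betaIntegral_convergent (u := α) (v := β) (by simpa) (by simpa)
  rw [intervalIntegrable_iff_integrableOn_Ioo_of_le zero_le_one] at h
  refine h.re.congr (ae_restrict_of_forall_mem measurableSet_Ioo fun t ht => ?_)
  simp only [← ofReal_betaWeight α β (Ioo_subset_Icc_self ht), RCLike.re_to_complex,
    Complex.ofReal_re]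

lemma integral_betaWeight {α β : ℝ} (hα : 0 < α) (hβ : 0 < β) :
    ∫ t in Ioo 0 1, betaWeight α β t = ProbabilityTheory.beta α β := by
  have hcomplex : Complex.betaIntegral α β = ∫ t in Ioo 0 1, (betaWeight α β t : ℂ) := by
    rw [Complex.betaIntegral, intervalIntegral.integral_of_le zero_le_one,
      integral_Ioc_eq_integral_Ioo]
    exact setIntegral_congr_fun measurableSet_Ioo fun t ht =>
      (ofReal_betaWeight α β (Ioo_subset_Icc_self ht)).symm
  rw [ProbabilityTheory.beta_eq_betaIntegralReal α β hα hβ, hcomplex, integral_complex_ofReal,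
    Complex.ofReal_re]

section Pointwise

variable {t : ℝ}

lemma betaWeight_pos (α β : ℝ) (ht : t ∈ Ioo 0 1) : 0 < betaWeight α β t :=
  mul_pos (Real.rpow_pos_of_pos ht.1 _) (Real.rpow_pos_of_pos (sub_pos.2 ht.2) _)

lemma betaWeight_le_betaWeight {α α' β β' : ℝ} (hα : α' ≤ α) (hβ : β' ≤ β) (ht : t ∈ Ioo 0 1) :
    betaWeight α β t ≤ betaWeight α' β' t := by
  have ht₀ : 0 < t := ht.1
  have ht₁ : 0 < 1 - t := sub_pos.2 ht.2
  exact mul_le_mul (Real.rpow_le_rpow_of_exponent_ge ht₀ ht.2.le (by linarith))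
    (Real.rpow_le_rpow_of_exponent_ge ht₁ (by linarith) (by linarith)) (by positivity)
    (by positivity)

lemma betaWeight_mul_rpow_neg_mul_rpow_neg (α β ε : ℝ) (ht : t ∈ Ioo 0 1) :
    betaWeight α β t * (t ^ (-ε) * (1 - t) ^ (-ε)) = betaWeight (α - ε) (β - ε) t := by
  rw [betaWeight, betaWeight, mul_mul_mul_comm, ← Real.rpow_add ht.1,
    ← Real.rpow_add (sub_pos.2 ht.2)]
  ring_nf

lemma betaWeight_add_natCast (α β : ℝ) (n : ℕ) (ht : 0 < t) :
    betaWeight (α + n) β t = t ^ n * betaWeight α β t := by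
  rw [betaWeight, betaWeight, add_sub_right_comm, Real.rpow_add ht, Real.rpow_natCast]
  ring

lemma neg_log_le_rpow_neg_div {ε : ℝ} (ht : 0 < t) (hε : 0 < ε) :
    -Real.log t ≤ t ^ (-ε) / ε := by
  have := Real.log_le_rpow_div (inv_nonneg.2 ht.le) hε
  rwa [Real.log_inv, Real.inv_rpow ht.le, ← Real.rpow_neg ht.le] at this

lemma abs_logit_le {ε : ℝ} (hε : 0 < ε) (ht : t ∈ Ioo 0 1) :
    |logit t| ≤ 2 / ε * (t ^ (-ε) * (1 - t) ^ (-ε)) := by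
  have ht₁ : 0 < 1 - t := sub_pos.2 ht.2
  have hlog_t := Real.log_neg ht.1 ht.2
  have hlog_sub := Real.log_neg ht₁ (sub_lt_self 1 ht.1)
  have hpow_t : 1 ≤ t ^ (-ε) :=
    Real.one_le_rpow_of_pos_of_le_one_of_nonpos ht.1 ht.2.le (by linarith)
  have hpow_sub : 1 ≤ (1 - t) ^ (-ε) :=
    Real.one_le_rpow_of_pos_of_le_one_of_nonpos ht₁ (sub_le_self 1 ht.1.le) (by linarith)
  calc |logit t| ≤ -Real.log t + -Real.log (1 - t) := by
        rw [logit, abs_le]; constructor <;> linarith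
    _ ≤ t ^ (-ε) / ε + (1 - t) ^ (-ε) / ε :=
        add_le_add (neg_log_le_rpow_neg_div ht.1 hε) (neg_log_le_rpow_neg_div ht₁ hε)
    _ = 1 / ε * (t ^ (-ε) + (1 - t) ^ (-ε)) := by ring
    _ ≤ 1 / ε * (2 * (t ^ (-ε) * (1 - t) ^ (-ε))) := by gcongr; nlinarith
    _ = 2 / ε * (t ^ (-ε) * (1 - t) ^ (-ε)) := by ring

lemma betaWeight_mul_abs_logit_le (α β : ℝ) {ε : ℝ} (hε : 0 < ε) (ht : t ∈ Ioo 0 1) :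
    betaWeight α β t * |logit t| ≤ 2 / ε * betaWeight (α - ε) (β - ε) t := by
  rw [← betaWeight_mul_rpow_neg_mul_rpow_neg α β ε ht, mul_left_comm]
  exact mul_le_mul_of_nonneg_left (abs_logit_le hε ht) (betaWeight_pos α β ht).le

lemma hasDerivAt_betaWeight_sub (a c : ℝ) (ht : t ∈ Ioo 0 1) :
    HasDerivAt (fun a' => betaWeight a' (c - a') t) (betaWeight a (c - a) t * logit t) a := by
  have hleft := ((hasDerivAt_id a).sub_const 1).const_rpow ht.1
  have hright := (((hasDerivAt_id a).const_sub c).sub_const 1).const_rpow (sub_pos.2 ht.2)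
  refine (hleft.mul hright).congr_deriv ?_
  simp only [betaWeight, logit, id]
  ring

end Pointwise

section BoundedFactor

variable {g : ℝ → ℝ} {C : ℝ}

lemma integrableOn_betaWeight_mul {α β : ℝ} (hα : 0 < α) (hβ : 0 < β)
    (hgm : AEStronglyMeasurable g (volume.restrict (Ioo 0 1)))
    (hg : ∀ t ∈ Ioo (0 : ℝ) 1, |g t| ≤ C) :
    IntegrableOn (fun t => betaWeight α β t * g t) (Ioo 0 1) :=
  (integrableOn_betaWeight hα hβ).mul_bdd hgm (ae_restrict_of_forall_mem measurableSet_Ioo hg)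

lemma integrableOn_betaWeight_mul_logit {α β : ℝ} (hα : 0 < α) (hβ : 0 < β) :
    IntegrableOn (fun t => betaWeight α β t * logit t) (Ioo 0 1) := by
  obtain ⟨ε, hε, hεlt⟩ := exists_between (lt_min hα hβ)
  obtain ⟨hεα, hεβ⟩ := lt_min_iff.1 hεlt
  refine ((integrableOn_betaWeight (sub_pos.2 hεα) (sub_pos.2 hεβ)).const_mul (2 / ε)).mono'
    (by fun_prop) (ae_restrict_of_forall_mem measurableSet_Ioo fun t ht => ?_)
  rw [norm_mul, Real.norm_of_nonneg (betaWeight_pos α β ht).le]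
  exact betaWeight_mul_abs_logit_le α β hε ht

lemma integrableOn_betaWeight_mul_mul_logit {α β : ℝ} (hα : 0 < α) (hβ : 0 < β)
    (hgm : AEStronglyMeasurable g (volume.restrict (Ioo 0 1)))
    (hg : ∀ t ∈ Ioo (0 : ℝ) 1, |g t| ≤ C) :
    IntegrableOn (fun t => betaWeight α β t * g t * logit t) (Ioo 0 1) := by
  simp only [mul_right_comm _ (g _)]
  exact (integrableOn_betaWeight_mul_logit hα hβ).mul_bdd hgm
    (ae_restrict_of_forall_mem measurableSet_Ioo hg)

lemma norm_betaWeight_mul_mul_logit_le {a a' c ε t : ℝ} (hε : 0 < ε)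
    (ha' : a' ∈ Ioo (a - ε) (a + ε)) (ht : t ∈ Ioo 0 1) (hg : |g t| ≤ C) :
    ‖betaWeight a' (c - a') t * g t * logit t‖ ≤
      2 / ε * betaWeight (a - 2 * ε) (c - a - 2 * ε) t * C := by
  have hshift : betaWeight (a' - ε) (c - a' - ε) t ≤ betaWeight (a - 2 * ε) (c - a - 2 * ε) t :=
    betaWeight_le_betaWeight (by linarith [ha'.1]) (by linarith [ha'.2]) ht
  have hpos := betaWeight_pos (a - 2 * ε) (c - a - 2 * ε) ht
  calc ‖betaWeight a' (c - a') t * g t * logit t‖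
      = betaWeight a' (c - a') t * |logit t| * |g t| := by
        rw [norm_mul, norm_mul, Real.norm_of_nonneg (betaWeight_pos _ _ ht).le, mul_right_comm,
          Real.norm_eq_abs, Real.norm_eq_abs]
    _ ≤ 2 / ε * betaWeight (a' - ε) (c - a' - ε) t * |g t| :=
        mul_le_mul_of_nonneg_right (betaWeight_mul_abs_logit_le _ _ hε ht) (abs_nonneg _)
    _ ≤ 2 / ε * betaWeight (a - 2 * ε) (c - a - 2 * ε) t * C := by gcongr

lemma hasDerivAt_integral_betaWeight_mul {a c : ℝ} (ha : 0 < a) (hac : a < c)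
    (hgm : AEStronglyMeasurable g (volume.restrict (Ioo 0 1)))
    (hg : ∀ t ∈ Ioo (0 : ℝ) 1, |g t| ≤ C) :
    HasDerivAt (fun a' => ∫ t in Ioo 0 1, betaWeight a' (c - a') t * g t)
      (∫ t in Ioo 0 1, betaWeight a (c - a) t * g t * logit t) a := by
  obtain ⟨ε, hε, hεlt⟩ := exists_between (half_pos (lt_min ha (sub_pos.2 hac)))
  obtain ⟨hεa, hεca⟩ : 2 * ε < a ∧ 2 * ε < c - a := lt_min_iff.1 (by linarith)
  have hderiv (t : ℝ) (ht : t ∈ Ioo 0 1) (a' : ℝ) :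
      HasDerivAt (fun a' => betaWeight a' (c - a') t * g t)
        (betaWeight a' (c - a') t * g t * logit t) a' := by
    rw [mul_right_comm]
    exact (hasDerivAt_betaWeight_sub a' c ht).mul_const (g t)
  have hbound_int : IntegrableOn
      (fun t => 2 / ε * betaWeight (a - 2 * ε) (c - a - 2 * ε) t * C) (Ioo 0 1) :=
    ((integrableOn_betaWeight (by linarith) (by linarith)).const_mul _).mul_const _
  exact (hasDerivAt_integral_of_dominated_loc_of_deriv_le
    (F := fun a' t => betaWeight a' (c - a') t * g t)
    (F' := fun a' t => betaWeight a' (c - a') t * g t * logit t)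
    (Ioo_mem_nhds (sub_lt_self a hε) (lt_add_of_pos_right a hε))
    (Eventually.of_forall fun a' => by fun_prop)
    (integrableOn_betaWeight_mul ha (sub_pos.2 hac) hgm hg) (by fun_prop)
    (ae_restrict_of_forall_mem measurableSet_Ioo fun t ht a' ha' =>
      norm_betaWeight_mul_mul_logit_le hε ha' ht (hg t ht))
    hbound_int
    (ae_restrict_of_forall_mem measurableSet_Ioo fun t ht a' _ => hderiv t ht a')).2

end BoundedFactor

/-! ### Euler's integral -/

/-- The integrand `tᵃ⁻¹ (1-t)ᶜ⁻ᵃ⁻¹ (1-xt)⁻ᵇ` of Euler's integral for `F(a,b,c,x)`, meaningful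
for `t ∈ (0,1)` and `x < 1`. -/
noncomputable def eulerKernel (a b c x t : ℝ) : ℝ :=
  betaWeight a (c - a) t * (1 - x * t) ^ (-b)

section EulerKernel

variable {x : ℝ}

lemma one_sub_mul_pos {t : ℝ} (hx : x < 1) (ht : t ∈ Icc 0 1) : 0 < 1 - x * t := by
  rcases ht.1.eq_or_lt with rfl | ht₀
  · simp
  · nlinarith [ht.2]

lemma eulerKernel_pos (a b c : ℝ) {t : ℝ} (hx : x < 1) (ht : t ∈ Ioo 0 1) :
    0 < eulerKernel a b c x t :=
  mul_pos (betaWeight_pos _ _ ht)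
    (Real.rpow_pos_of_pos (one_sub_mul_pos hx (Ioo_subset_Icc_self ht)) _)

lemma exists_abs_one_sub_mul_rpow_le (b : ℝ) (hx : x < 1) :
    ∃ C, ∀ t ∈ Ioo (0 : ℝ) 1, |(1 - x * t) ^ b| ≤ C := by
  have hcont : ContinuousOn (fun t => (1 - x * t) ^ b) (Icc 0 1) :=
    ContinuousOn.rpow_const (by fun_prop) fun t ht => Or.inl (one_sub_mul_pos hx ht).ne'
  obtain ⟨C, hC⟩ := isCompact_Icc.exists_bound_of_continuousOn hcont
  exact ⟨C, fun t ht => hC t (Ioo_subset_Icc_self ht)⟩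

lemma strictMonoOn_one_sub_mul_rpow_neg {d : ℝ} (hx : x < 1) (hd : 0 < x * d) :
    StrictMonoOn (fun t => (1 - x * t) ^ (-d)) (Icc 0 1) := by
  intro s hs t ht hst
  have hs_pos := one_sub_mul_pos hx hs
  have ht_pos := one_sub_mul_pos hx ht
  rcases pos_and_pos_or_neg_and_neg_of_mul_pos hd with ⟨hx₀, hd₀⟩ | ⟨hx₀, hd₀⟩
  · exact Real.rpow_lt_rpow_of_neg ht_pos (by nlinarith) (neg_lt_zero.2 hd₀)
  · exact Real.rpow_lt_rpow hs_pos.le (by nlinarith) (neg_pos.2 hd₀)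

lemma eulerKernel_div_eulerKernel (a b₁ b₂ c : ℝ) {t : ℝ} (hx : x < 1) (ht : t ∈ Ioo 0 1) :
    eulerKernel a b₁ c x t / eulerKernel a b₂ c x t = (1 - x * t) ^ (-(b₁ - b₂)) := by
  rw [eulerKernel, eulerKernel, mul_div_mul_left _ _ (betaWeight_pos _ _ ht).ne',
    ← Real.rpow_sub (one_sub_mul_pos hx (Ioo_subset_Icc_self ht))]
  ring_nf

variable {a c : ℝ}

lemma integrableOn_eulerKernel (b : ℝ) (ha : 0 < a) (hac : a < c) (hx : x < 1) :
    IntegrableOn (eulerKernel a b c x) (Ioo 0 1) := by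
  obtain ⟨C, hC⟩ := exists_abs_one_sub_mul_rpow_le (-b) hx
  exact integrableOn_betaWeight_mul ha (sub_pos.2 hac)
    (Measurable.aestronglyMeasurable (by fun_prop)) hC

lemma integrableOn_eulerKernel_mul_logit (b : ℝ) (ha : 0 < a) (hac : a < c) (hx : x < 1) :
    IntegrableOn (fun t => eulerKernel a b c x t * logit t) (Ioo 0 1) := by
  obtain ⟨C, hC⟩ := exists_abs_one_sub_mul_rpow_le (-b) hx
  exact integrableOn_betaWeight_mul_mul_logit ha (sub_pos.2 hac)
    (Measurable.aestronglyMeasurable (by fun_prop)) hC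

lemma hasDerivAt_integral_eulerKernel (b : ℝ) (ha : 0 < a) (hac : a < c) (hx : x < 1) :
    HasDerivAt (fun a' => ∫ t in Ioo 0 1, eulerKernel a' b c x t)
      (∫ t in Ioo 0 1, eulerKernel a b c x t * logit t) a := by
  obtain ⟨C, hC⟩ := exists_abs_one_sub_mul_rpow_le (-b) hx
  exact hasDerivAt_integral_betaWeight_mul ha hac
    (Measurable.aestronglyMeasurable (by fun_prop)) hC

lemma integral_eulerKernel_pos (b : ℝ) (ha : 0 < a) (hac : a < c) (hx : x < 1) :
    0 < ∫ t in Ioo 0 1, eulerKernel a b c x t :=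
  integral_pos_of_ae_pos (by simp) (integrableOn_eulerKernel b ha hac hx)
    (ae_restrict_of_forall_mem measurableSet_Ioo fun t ht => eulerKernel_pos a b c hx ht)

lemma integral_eulerKernel_mul_integral_logit_lt {b₁ b₂ : ℝ} (ha : 0 < a) (hac : a < c)
    (hx : x < 1) (hb : 0 < x * (b₁ - b₂)) :
    (∫ t in Ioo 0 1, eulerKernel a b₁ c x t) * (∫ t in Ioo 0 1, eulerKernel a b₂ c x t * logit t) <
      (∫ t in Ioo 0 1, eulerKernel a b₁ c x t * logit t) *
        ∫ t in Ioo 0 1, eulerKernel a b₂ c x t := by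
  have hratio : StrictMonoOn (fun t => eulerKernel a b₁ c x t / eulerKernel a b₂ c x t)
      (Ioo 0 1) :=
    ((strictMonoOn_one_sub_mul_rpow_neg hx hb).mono Ioo_subset_Icc_self).congr fun t ht =>
      (eulerKernel_div_eulerKernel a b₁ b₂ c hx ht).symm
  exact setIntegral_mul_setIntegral_mul_lt_of_strictMonoOn measurableSet_Ioo (by simp)
    (fun t ht => eulerKernel_pos a b₂ c hx ht) hratio strictMonoOn_logit
    (integrableOn_eulerKernel b₁ ha hac hx) (integrableOn_eulerKernel b₂ ha hac hx)
    (integrableOn_eulerKernel_mul_logit b₁ ha hac hx)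
    (integrableOn_eulerKernel_mul_logit b₂ ha hac hx)

end EulerKernel

section EulerRepresentation

variable {x : ℝ}

lemma hasSum_betaWeight_add_natCast (a b c : ℝ) {t : ℝ} (hx : |x| < 1) (ht : t ∈ Ioo 0 1) :
    HasSum (fun n : ℕ => risingFactorial b n / n.factorial * x ^ n * betaWeight (a + n) (c - a) t)
      (eulerKernel a b c x t) := by
  have hxt : |x * t| < 1 := by
    rw [abs_mul, abs_of_pos ht.1]
    exact mul_lt_one_of_nonneg_of_lt_one_left (abs_nonneg x) hx ht.2.le
  refine ((hasSum_risingFactorial_div_factorial_mul_pow b hxt).mul_left _).congr_fun fun n => ?_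
  rw [betaWeight_add_natCast a (c - a) n ht.1, mul_pow]
  ring

variable {a c : ℝ}

lemma hasSum_integral_betaWeight_add_natCast (b : ℝ) (ha : 0 < a) (hac : a < c)
    (hx : |x| < 1) :
    HasSum (fun n : ℕ => ∫ t in Ioo 0 1,
        risingFactorial b n / n.factorial * x ^ n * betaWeight (a + n) (c - a) t)
      (∫ t in Ioo 0 1, eulerKernel a b c x t) := by
  have hsum := (hasSum_risingFactorial_div_factorial_mul_pow b hx).summable.abs
  refine hasSum_integral_of_dominated_convergence
    (fun n t => |risingFactorial b n / n.factorial * x ^ n| * betaWeight a (c - a) t)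
    (fun n => by fun_prop)
    (fun n => ae_restrict_of_forall_mem measurableSet_Ioo fun t ht => ?_)
    (ae_of_all _ fun t => hsum.mul_right _) ?_
    (ae_restrict_of_forall_mem measurableSet_Ioo fun t ht =>
      hasSum_betaWeight_add_natCast a b c hx ht)
  · rw [norm_mul, Real.norm_eq_abs, Real.norm_of_nonneg (betaWeight_pos _ _ ht).le]
    gcongr
    exact betaWeight_le_betaWeight (le_add_of_nonneg_right n.cast_nonneg) le_rfl ht
  · simp_rw [tsum_mul_right]
    exact (integrableOn_betaWeight ha (sub_pos.2 hac)).const_mul _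

lemma integral_eulerKernel_eq_beta_mul_hypF (b : ℝ) (ha : 0 < a) (hac : a < c)
    (hx : |x| < 1) :
    ∫ t in Ioo 0 1, eulerKernel a b c x t = ProbabilityTheory.beta a (c - a) * hypF a b c x := by
  rw [← (hasSum_integral_betaWeight_add_natCast b ha hac hx).tsum_eq, hypF, ← tsum_mul_left]
  refine tsum_congr fun n => ?_
  rw [integral_const_mul, integral_betaWeight (by positivity) (sub_pos.2 hac),
    beta_add_natCast ha (sub_pos.2 hac), add_sub_cancel]
  ring

end EulerRepresentation

/-! ### The ratio of two hypergeometric functions -/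

lemma hasDerivAt_hypF_div_hypF (b₁ b₂ : ℝ) {a c x : ℝ} (ha : 0 < a) (hac : a < c)
    (hx : |x| < 1) :
    HasDerivAt (fun a' => hypF a' b₁ c x / hypF a' b₂ c x)
      (((∫ t in Ioo 0 1, eulerKernel a b₁ c x t * logit t) *
          (∫ t in Ioo 0 1, eulerKernel a b₂ c x t) -
        (∫ t in Ioo 0 1, eulerKernel a b₁ c x t) *
          ∫ t in Ioo 0 1, eulerKernel a b₂ c x t * logit t) /
        (∫ t in Ioo 0 1, eulerKernel a b₂ c x t) ^ 2) a := by
  have hx₁ : x < 1 := (abs_lt.1 hx).2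
  refine ((hasDerivAt_integral_eulerKernel b₁ ha hac hx₁).fun_div
    (hasDerivAt_integral_eulerKernel b₂ ha hac hx₁)
    (integral_eulerKernel_pos b₂ ha hac hx₁).ne').congr_of_eventuallyEq ?_
  filter_upwards [Ioo_mem_nhds ha hac] with a' ha'
  have hbeta := ProbabilityTheory.beta_pos ha'.1 (sub_pos.2 ha'.2)
  rw [integral_eulerKernel_eq_beta_mul_hypF b₁ ha'.1 ha'.2 hx,
    integral_eulerKernel_eq_beta_mul_hypF b₂ ha'.1 ha'.2 hx, mul_div_mul_left _ _ hbeta.ne']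

lemma real_sign_mul_of_pos {r : ℝ} (hr : 0 < r) (s : ℝ) : Real.sign (r * s) = Real.sign s := by
  simp only [Real.sign, ← smul_eq_mul, smul_neg_iff_of_pos_left hr, smul_pos_iff_of_pos_left hr]

theorem stmt13_general (a b₁ b₂ c x : ℝ) (ha : 0 < a) (hac : a < c) (hx : |x| < 1) :
    Real.sign (deriv (fun a' : ℝ => hypF a' b₁ c x / hypF a' b₂ c x) a) =
      Real.sign (x * (b₁ - b₂)) := by
  have hx₁ : x < 1 := (abs_lt.1 hx).2
  have hdenom := pow_pos (integral_eulerKernel_pos b₂ ha hac hx₁) 2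
  rw [(hasDerivAt_hypF_div_hypF b₁ b₂ ha hac hx).deriv]
  rcases lt_trichotomy (x * (b₁ - b₂)) 0 with hneg | hzero | hpos
  · have hlt := integral_eulerKernel_mul_integral_logit_lt ha hac hx₁
      (b₁ := b₂) (b₂ := b₁) (by linarith)
    rw [Real.sign_of_neg hneg, Real.sign_of_neg (div_neg_of_neg_of_pos (by linarith) hdenom)]
  · have hkernel : eulerKernel a b₁ c x = eulerKernel a b₂ c x := by
      rcases mul_eq_zero.1 hzero with rfl | hb
      · funext t; simp [eulerKernel]
      · rw [sub_eq_zero.1 hb]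
    rw [hkernel, hzero, mul_comm, sub_self, zero_div]
  · have hlt := integral_eulerKernel_mul_integral_logit_lt ha hac hx₁ hpos
    rw [Real.sign_of_pos hpos, Real.sign_of_pos (div_pos (by linarith) hdenom)]

/-- For `c > a > 0` and `0 < x < 1`,
`sgn(D_a (F(a,b₁,c,x)/F(a,b₂,c,x))) = sgn(b₁ - b₂)`. -/
theorem stmt13 (a b₁ b₂ c x : ℝ) (ha : 0 < a) (hac : a < c)
    (hx : x ∈ Set.Ioo (0 : ℝ) 1) :
    Real.sign (deriv (fun a' : ℝ => hypF a' b₁ c x / hypF a' b₂ c x) a) =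
      Real.sign (b₁ - b₂) := by
  rw [stmt13_general a b₁ b₂ c x ha hac (abs_lt.2 ⟨by linarith [hx.1], hx.2⟩),
    real_sign_mul_of_pos hx.1]
end

section
/- Let ν > 0 and let (u_n)_{n≥0} be a bounded sequence of real numbers. Then the function f(x) = (1−x)^ν ∑_{n=0}^∞ ((ν)_n / n!) x^n u_n is differentiable on (0,1) with derivative f'(x) = (1−x)^{ν−1} ∑_{n=0}^∞ ((ν)_n / n!) (ν+n) (u_{n+1} − u_n) x^n. -/
/-!
The coefficients `a n = (ν)_n / n!` satisfy `(n + 1) * a (n + 1) = (ν + n) * a n`. Hence, with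
`F x = ∑ a n * u n * x ^ n`, the series `∑ a n * (ν + n) * (u (n + 1) - u n) * x ^ n` equals
`F' x - (ν * F x + x * F' x) = (1 - x) * F' x - ν * F x`, and multiplying by `(1 - x) ^ (ν - 1)`
gives the derivative of `(1 - x) ^ ν * F x`.
-/

open Asymptotics Filter Topology

/-- Sequences growing more slowly than every geometric sequence of ratio `R > 1`; equivalently, the
power series with coefficients `c` has radius of convergence at least `1`. The big-O form makes
stability under products and shifts immediate. -/
def HasSubexponentialGrowth {𝕜 : Type*} [Norm 𝕜] (c : ℕ → 𝕜) : Prop :=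
  ∀ R : ℝ, 1 < R → c =O[atTop] fun n => R ^ n

namespace HasSubexponentialGrowth

section NormedField

variable {𝕜 : Type*} [NormedField 𝕜] {c d : ℕ → 𝕜}

theorem of_bounded {C : ℝ} (hc : ∀ n, ‖c n‖ ≤ C) : HasSubexponentialGrowth c := by
  intro R hR
  have bounded : c =O[atTop] fun _ => (1 : ℝ) :=
    .of_bound C (.of_forall fun n => by simpa using hc n)
  refine bounded.trans (.of_bound 1 (.of_forall fun n => ?_))
  simpa [abs_of_pos (zero_lt_one.trans hR)] using one_le_pow₀ hR.le

theorem natCast : HasSubexponentialGrowth fun n : ℕ => (n : 𝕜) := by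
  intro R hR
  have natCast_isBigO : (fun n : ℕ => (n : 𝕜)) =O[atTop] fun n : ℕ => (n : ℝ) :=
    .of_bound 1 (.of_forall fun n => by simpa using Nat.norm_cast_le (α := 𝕜) n)
  exact natCast_isBigO.trans (isLittleO_coe_const_pow_of_one_lt hR).isBigO

theorem mul (hc : HasSubexponentialGrowth c) (hd : HasSubexponentialGrowth d) :
    HasSubexponentialGrowth fun n => c n * d n := by
  intro R hR
  have one_lt_sqrt : 1 < √R := Real.lt_sqrt_of_sq_lt (by simpa using hR)
  refine ((hc _ one_lt_sqrt).mul (hd _ one_lt_sqrt)).congr_right fun n => ?_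
  rw [← mul_pow, Real.mul_self_sqrt (by positivity)]

theorem comp_succ (hc : HasSubexponentialGrowth c) :
    HasSubexponentialGrowth fun n => c (n + 1) := by
  intro R hR
  refine ((hc R hR).comp_tendsto (tendsto_add_atTop_nat 1)).trans ?_
  exact ((isBigO_refl (fun n => R ^ n) atTop).const_mul_left R).congr_left
    fun n => (pow_succ' R n).symm

theorem of_tendsto_ratio {q : ℕ → 𝕜} (hcq : ∀ n, c (n + 1) = q n * c n)
    (hq : Tendsto q atTop (𝓝 1)) : HasSubexponentialGrowth c := by
  intro R hR
  have norm_ratio_le : ∀ᶠ n in atTop, ‖q n‖ ≤ R :=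
    hq.norm.eventually_le_const (by simpa using hR)
  obtain ⟨N, hN⟩ := eventually_atTop.1 norm_ratio_le
  have norm_add_le (k : ℕ) : ‖c (N + k)‖ ≤ ‖c N‖ * R ^ k := by
    induction k with
    | zero => simp
    | succ k ih =>
      calc ‖c (N + k + 1)‖ = ‖q (N + k)‖ * ‖c (N + k)‖ := by rw [hcq, norm_mul]
        _ ≤ R * (‖c N‖ * R ^ k) := by gcongr; exact hN _ (Nat.le_add_right N k)
        _ = ‖c N‖ * R ^ (k + 1) := by ring
  refine .of_bound ‖c N‖ ((eventually_ge_atTop N).mono fun n hn => ?_)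
  obtain ⟨k, rfl⟩ := Nat.exists_eq_add_of_le hn
  rw [Real.norm_of_nonneg (by positivity)]
  refine (norm_add_le k).trans ?_
  gcongr
  exacts [hR.le, Nat.le_add_left k N]

theorem summable_norm_mul_pow (hc : HasSubexponentialGrowth c) {r : ℝ} (hr₀ : 0 ≤ r)
    (hr₁ : r < 1) : Summable fun n => ‖c n‖ * r ^ n := by
  obtain ⟨s, hrs, hs₁⟩ := exists_between hr₁
  have s_pos : 0 < s := hr₀.trans_lt hrs
  have ratio_lt_one : s⁻¹ * r < 1 := (inv_mul_lt_one₀ s_pos).2 hrs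
  refine summable_of_isBigO_nat (summable_geometric_of_lt_one (by positivity) ratio_lt_one) ?_
  refine ((hc s⁻¹ (one_lt_inv₀ s_pos |>.2 hs₁)).norm_left.mul
    (isBigO_refl (fun n => r ^ n) atTop)).congr_right fun n => ?_
  exact (mul_pow _ _ n).symm

theorem summable_mul_pow [CompleteSpace 𝕜] (hc : HasSubexponentialGrowth c) {x : 𝕜}
    (hx : ‖x‖ < 1) : Summable fun n => c n * x ^ n :=
  .of_norm <| by simpa only [norm_mul, norm_pow] using hc.summable_norm_mul_pow (norm_nonneg x) hx

theorem natCast_mul (hc : HasSubexponentialGrowth c) :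
    HasSubexponentialGrowth fun n => n * c n :=
  natCast.mul hc

theorem tsum_natCast_mul_mul_pow [CompleteSpace 𝕜] (hc : HasSubexponentialGrowth c) {x : 𝕜}
    (hx : ‖x‖ < 1) :
    ∑' n : ℕ, n * c n * x ^ n = x * ∑' n : ℕ, ((n + 1 : ℕ) : 𝕜) * c (n + 1) * x ^ n := by
  rw [(hc.natCast_mul.summable_mul_pow hx).tsum_eq_zero_add, ← tsum_mul_left]
  simp only [Nat.cast_zero, zero_mul, zero_add, pow_succ', mul_left_comm x]

end NormedField

theorem hasDerivAt_tsum_mul_pow {𝕜 : Type*} [RCLike 𝕜] {c : ℕ → 𝕜}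
    (hc : HasSubexponentialGrowth c) {x : 𝕜} (hx : ‖x‖ < 1) :
    HasDerivAt (fun y => ∑' n : ℕ, c n * y ^ n)
      (∑' n : ℕ, ((n + 1 : ℕ) : 𝕜) * c (n + 1) * x ^ n) x := by
  obtain ⟨r, hxr, hr₁⟩ := exists_between hx
  have r_nonneg : 0 ≤ r := (norm_nonneg x).trans hxr.le
  have summable_bound : Summable fun n : ℕ => ‖n * c n‖ * r ^ (n - 1) :=
    (summable_nat_add_iff 1).1 <| hc.natCast_mul.comp_succ.summable_norm_mul_pow r_nonneg hr₁
  have summable_deriv : Summable fun n : ℕ => n * c n * x ^ (n - 1) :=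
    (summable_nat_add_iff 1).1 <| hc.natCast_mul.comp_succ.summable_mul_pow hx
  have mem_ball : x ∈ Metric.ball (0 : 𝕜) r := mem_ball_zero_iff.2 hxr
  have termwise : HasDerivAt (fun y => ∑' n : ℕ, c n * y ^ n)
      (∑' n : ℕ, n * c n * x ^ (n - 1)) x := by
    refine hasDerivAt_tsum_of_isPreconnected (g' := fun n y => n * c n * y ^ (n - 1))
      summable_bound Metric.isOpen_ball
      (convex_ball (0 : 𝕜) r).isPreconnected (fun n y _ => ?_) (fun n y hy => ?_)
      mem_ball (hc.summable_mul_pow hx) mem_ball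
    · exact ((hasDerivAt_pow n y).const_mul (c n)).congr_deriv (by ring)
    · rw [norm_mul, norm_pow]
      gcongr
      exact (mem_ball_zero_iff.1 hy).le
  refine termwise.congr_deriv ?_
  rw [summable_deriv.tsum_eq_zero_add]
  simp only [Nat.cast_zero, zero_mul, zero_add, Nat.add_sub_cancel]

end HasSubexponentialGrowth

/-- The coefficient `(ν)_n / n!` of `x ^ n` in the expansion of `(1 - x) ^ (-ν)`, which is the
weight of `u n` in the Baskakov operator. -/
noncomputable def baskakovCoeff (ν : ℝ) (n : ℕ) : ℝ :=
  risingFactorial ν n / (Nat.factorial n : ℝ)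

theorem succ_mul_baskakovCoeff_succ (ν : ℝ) (n : ℕ) :
    ((n + 1 : ℕ) : ℝ) * baskakovCoeff ν (n + 1) = baskakovCoeff ν n * (ν + n) := by
  rw [baskakovCoeff, baskakovCoeff, risingFactorial, Nat.factorial_succ, Nat.cast_mul]
  field_simp

theorem hasSubexponentialGrowth_baskakovCoeff (ν : ℝ) :
    HasSubexponentialGrowth (baskakovCoeff ν) := by
  refine .of_tendsto_ratio (q := fun n => (ν + 1 * n) / (1 + 1 * n)) (fun n => ?_) ?_
  · have recurrence := succ_mul_baskakovCoeff_succ ν n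
    push_cast at recurrence
    field_simp
    linarith
  · simpa only [div_one] using
      tendsto_add_mul_div_add_mul_atTop_nhds ν 1 (1 : ℝ) one_ne_zero

theorem tsum_baskakovCoeff_mul_sub {ν x : ℝ} {u : ℕ → ℝ} (hu : HasSubexponentialGrowth u)
    (hx : |x| < 1) :
    ∑' n : ℕ, baskakovCoeff ν n * (ν + n) * (u (n + 1) - u n) * x ^ n =
      (1 - x) * ∑' n : ℕ, ((n + 1 : ℕ) : ℝ) * (baskakovCoeff ν (n + 1) * u (n + 1)) * x ^ n -
        ν * ∑' n : ℕ, baskakovCoeff ν n * u n * x ^ n := by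
  have growth : HasSubexponentialGrowth fun n => baskakovCoeff ν n * u n :=
    (hasSubexponentialGrowth_baskakovCoeff ν).mul hu
  have summable_series := growth.summable_mul_pow hx
  have summable_index_mul := growth.natCast_mul.summable_mul_pow hx
  have summable_deriv := growth.natCast_mul.comp_succ.summable_mul_pow hx
  calc ∑' n : ℕ, baskakovCoeff ν n * (ν + n) * (u (n + 1) - u n) * x ^ n
      = ∑' n : ℕ, (((n + 1 : ℕ) : ℝ) * (baskakovCoeff ν (n + 1) * u (n + 1)) * x ^ n -
          (ν * (baskakovCoeff ν n * u n * x ^ n) + n * (baskakovCoeff ν n * u n) * x ^ n)) := by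
        refine tsum_congr fun n => ?_
        rw [← mul_assoc _ (baskakovCoeff ν (n + 1)), succ_mul_baskakovCoeff_succ]
        ring
    _ = ∑' n : ℕ, ((n + 1 : ℕ) : ℝ) * (baskakovCoeff ν (n + 1) * u (n + 1)) * x ^ n -
          (ν * ∑' n : ℕ, baskakovCoeff ν n * u n * x ^ n +
            ∑' n : ℕ, n * (baskakovCoeff ν n * u n) * x ^ n) := by
        rw [summable_deriv.tsum_sub ((summable_series.mul_left ν).add summable_index_mul),
          (summable_series.mul_left ν).tsum_add summable_index_mul, tsum_mul_left]
    _ = _ := by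
        rw [growth.tsum_natCast_mul_mul_pow hx]
        ring

theorem hasDerivAt_one_sub_rpow_mul {F : ℝ → ℝ} {F' x : ℝ} (ν : ℝ) (hF : HasDerivAt F F' x)
    (hx : x < 1) :
    HasDerivAt (fun y => (1 - y) ^ ν * F y) ((1 - x) ^ (ν - 1) * ((1 - x) * F' - ν * F x)) x := by
  have one_sub_pos : 0 < 1 - x := sub_pos.2 hx
  have hasDerivAt_rpow : HasDerivAt (fun y : ℝ => (1 - y) ^ ν) (-1 * ν * (1 - x) ^ (ν - 1)) x :=
    ((hasDerivAt_id x).const_sub 1).rpow_const (.inl one_sub_pos.ne')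
  have rpow_eq : (1 - x) ^ ν = (1 - x) ^ (ν - 1) * (1 - x) := by
    rw [← Real.rpow_add_one one_sub_pos.ne', sub_add_cancel]
  refine (hasDerivAt_rpow.mul hF).congr_deriv ?_
  rw [rpow_eq]
  ring

theorem stmt17_general (ν : ℝ) {u : ℕ → ℝ} (hu : HasSubexponentialGrowth u) {x : ℝ}
    (hx : |x| < 1) :
    HasDerivAt
      (fun y : ℝ => (1 - y) ^ ν *
        ∑' n : ℕ, risingFactorial ν n / (Nat.factorial n : ℝ) * y ^ n * u n)
      ((1 - x) ^ (ν - 1) *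
        ∑' n : ℕ, risingFactorial ν n / (Nat.factorial n : ℝ) *
          (ν + (n : ℝ)) * (u (n + 1) - u n) * x ^ n)
      x := by
  have growth : HasSubexponentialGrowth fun n => baskakovCoeff ν n * u n :=
    (hasSubexponentialGrowth_baskakovCoeff ν).mul hu
  have product_rule :=
    hasDerivAt_one_sub_rpow_mul ν (growth.hasDerivAt_tsum_mul_pow hx) (abs_lt.1 hx).2
  rw [← tsum_baskakovCoeff_mul_sub hu hx] at product_rule
  simpa only [baskakovCoeff, mul_right_comm _ (_ ^ _) (u _)] using product_rule

/-- Derivative of Baskakov's operator: for `ν > 0` and bounded `(u_n)`,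
`f(x) = (1-x)^ν ∑_n ((ν)_n/n!) xⁿ u_n` is differentiable on `(0,1)` with
`f'(x) = (1-x)^{ν-1} ∑_n ((ν)_n/n!) (ν+n) (u_{n+1}-u_n) xⁿ`. -/
theorem stmt17 (ν : ℝ) (hν : 0 < ν) (u : ℕ → ℝ) (C : ℝ)
    (hu : ∀ n : ℕ, |u n| ≤ C) :
    ∀ x ∈ Set.Ioo (0 : ℝ) 1,
      HasDerivAt
        (fun y : ℝ => (1 - y) ^ ν *
          ∑' n : ℕ, risingFactorial ν n / (Nat.factorial n : ℝ) * y ^ n * u n)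
        ((1 - x) ^ (ν - 1) *
          ∑' n : ℕ, risingFactorial ν n / (Nat.factorial n : ℝ) *
            (ν + (n : ℝ)) * (u (n + 1) - u n) * x ^ n)
        x := by
  exact fun x hx => stmt17_general ν (.of_bounded hu) (abs_lt.2 ⟨by linarith [hx.1], hx.2⟩)
end
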